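/- arXiv:1704.08083 — 2 statements merged into one kernel-verified Lean document; each statement's English description precedes it below -/
import Mathlib

section
/- Consider the error-free block-coordinate setting: H_1, …, H_m separable real Hilbert spaces with direct Hilbert sum H = H_1 ⊕ ⋯ ⊕ H_m; constants τ_{i,n} ∈ [0,1); for every n, a measurable quasinonexpansive operator T_n: H → H, x ↦ (T_{i,n} x)_{1≤i≤m}, all with a common fixed point x̄ = (x̄_i)_{1≤i≤m}, satisfying ‖T_n x − x̄‖² ≤ Σ_{i=1}^{m} τ_{i,n} ‖x_i − x̄_i‖² for all n and all x ∈ H. The algorithm: (λ_n) a sequence in (0,1] with inf_n λ_n > 0; D = {0,1}^m \ {0}; x_0 an H-valued random variable; (ε_n) identically distributed D-valued random variables; and for all n and i, x_{i,n+1} = x_{i,n} + ε_{i,n} λ_n (T_{i,n}(x_{1,n}, …, x_{m,n}) − x_{i,n}). Let (F_n) be a filtration with σ(x_0, …, x_n) ⊆ F_n for all n, assume for every n that σ(ε_n) and F_n are independent, and that p_i = P[ε_{i,0} = 1] > 0 for every i. Set χ_n = 1 − λ_n min_{1≤i≤m} p_i(1 − τ_{i,n}) for every n. Then for every n, E[‖x_{n+1}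 − x̄‖² | F_0] ≤ (max_{1≤i≤m} p_i / min_{1≤i≤m} p_i) (Π_{k=0}^{n} χ_k) ‖x_0 − x̄‖² P-almost surely; moreover, if max_{1≤i≤m} sup_n τ_{i,n} < 1, then sup_n χ_n < 1, so the conditional mean-square error converges linearly to 0. -/
open MeasureTheory Filter Finset ProbabilityTheory

/-! Weight the squared distance in block `i` by `1 / p_i`. Given the past, block `i` is activated
with probability `p_i`, so by convexity of the squared norm the random step costs, in conditional
mean, no more than a relaxed step in which the weight `1 / p_i` cancels against `p_i` in front of
`T_{i,n}`. The bound on `‖T_n x - x̄‖²` then shows that the weighted squared distance decreases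
by the factor `χ_n`. Iterating with the tower property gives the product of the `χ_k`, and the
factor `max p / min p` is the price of comparing the weighted distance with the unweighted one.

Since `x_0` need not be square integrable, the recursion is run with the conditional Lebesgue
expectation of nonnegative functions and only its outcome is transferred to the Bochner one. When
`‖x_{n+1} - x̄‖²` is not integrable, the latter is `0` by convention. -/

open scoped ENNReal

section ConditionalExpectation

variable {Ω : Type*} {m m₀ : MeasurableSpace Ω} {μ : Measure Ω}

theorem condLExp_condLExp_of_le {m₁ m₂ : MeasurableSpace Ω} (hm₁₂ : m₁ ≤ m₂) (hm₂ : m₂ ≤ m₀)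
    [SigmaFinite (μ.trim hm₂)] (X : Ω → ℝ≥0∞) : μ⁻[μ⁻[X | m₂] | m₁] =ᵐ[μ] μ⁻[X | m₁] := by
  by_cases hμ : SigmaFinite (μ.trim (hm₁₂.trans hm₂))
  · refine ae_eq_condLExp _ _ _ (measurable_condLExp _ _ _) fun s hs ↦ ?_
    rw [setLIntegral_condLExp _ _ _ hs, setLIntegral_condLExp _ _ _ (hm₁₂ s hs)]
  · simp only [condLExp_of_not_sigmaFinite (hm₁₂.trans hm₂) hμ, EventuallyEq.rfl]

theorem trim_withDensity_condLExp (hm : m ≤ m₀) [SigmaFinite (μ.trim hm)] (X : Ω → ℝ≥0∞) :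
    (μ.withDensity μ⁻[X | m]).trim hm = (μ.withDensity X).trim hm := by
  refine @Measure.ext _ m _ _ fun s hs ↦ ?_
  rw [trim_measurableSet_eq hm hs, trim_measurableSet_eq hm hs, withDensity_apply _ (hm s hs),
    withDensity_apply _ (hm s hs), setLIntegral_condLExp hm μ X hs]

theorem condLExp_mul_of_measurable_right (hm : m ≤ m₀) [SigmaFinite (μ.trim hm)]
    {X Y : Ω → ℝ≥0∞} (hX : AEMeasurable X μ) (hY : Measurable[m] Y) :
    μ⁻[X * Y | m] =ᵐ[μ] μ⁻[X | m] * Y := by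
  have hY₀ : AEMeasurable Y μ := (hY.mono hm le_rfl).aemeasurable
  refine (ae_eq_condLExp hm μ (X * Y) ((measurable_condLExp m μ X).mul hY) fun s hs ↦ ?_).symm
  rw [← setLIntegral_withDensity_eq_lintegral_mul₀ hX hY₀ (hm s hs),
    ← setLIntegral_withDensity_eq_lintegral_mul₀ (measurable_condLExp' m μ X).aemeasurable hY₀
      (hm s hs),
    ← setLIntegral_trim hm hY hs, ← setLIntegral_trim hm hY hs, trim_withDensity_condLExp]

theorem condLExp_ofReal_mul_of_measurable_right (hm : m ≤ m₀) [SigmaFinite (μ.trim hm)]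
    {f g : Ω → ℝ} (hf : Integrable f μ) (hf₀ : 0 ≤ᵐ[μ] f) (hg : Measurable[m] g) (hg₀ : 0 ≤ g) :
    μ⁻[fun ω ↦ ENNReal.ofReal (f ω * g ω) | m] =ᵐ[μ] fun ω ↦ ENNReal.ofReal (μ[f | m] ω * g ω) := by
  have hmul (h : Ω → ℝ) : (fun ω ↦ ENNReal.ofReal (h ω * g ω)) =
      (fun ω ↦ ENNReal.ofReal (h ω)) * fun ω ↦ ENNReal.ofReal (g ω) :=
    funext fun ω ↦ ENNReal.ofReal_mul' (hg₀ ω)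
  rw [hmul, hmul]
  exact (condLExp_mul_of_measurable_right hm hf.aemeasurable.ennreal_ofReal hg.ennreal_ofReal).trans
    ((condLExp_ofReal m hf hf₀).mul .rfl)

theorem condLExp_ofReal_convexComb [IsFiniteMeasure μ] (hm : m ≤ m₀) {θ a b : Ω → ℝ}
    (hθ : Measurable θ) (hθ_mem : ∀ ω, θ ω ∈ Set.Icc (0 : ℝ) 1)
    (ha : Measurable[m] a) (ha₀ : 0 ≤ a) (hb : Measurable[m] b) (hb₀ : 0 ≤ b) :
    μ⁻[fun ω ↦ ENNReal.ofReal ((1 - θ ω) * a ω + θ ω * b ω) | m] =ᵐ[μ]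
      fun ω ↦ ENNReal.ofReal ((1 - μ[θ | m] ω) * a ω + μ[θ | m] ω * b ω) := by
  have hθ_int : Integrable θ μ := .of_mem_Icc 0 1 hθ.aemeasurable (.of_forall hθ_mem)
  have hcompl_int : Integrable (fun ω ↦ 1 - θ ω) μ := (integrable_const 1).sub hθ_int
  have hadd : (fun ω ↦ ENNReal.ofReal ((1 - θ ω) * a ω + θ ω * b ω)) =
      (fun ω ↦ ENNReal.ofReal ((1 - θ ω) * a ω)) + fun ω ↦ ENNReal.ofReal (θ ω * b ω) :=
    funext fun ω ↦ ENNReal.ofReal_add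
      (mul_nonneg (sub_nonneg.2 (hθ_mem ω).2) (ha₀ ω)) (mul_nonneg (hθ_mem ω).1 (hb₀ ω))
  have hmeas : AEMeasurable (fun ω ↦ ENNReal.ofReal (θ ω * b ω)) μ :=
    (hθ.mul (hb.mono hm le_rfl)).ennreal_ofReal.aemeasurable
  have hcompl : μ[fun ω ↦ 1 - θ ω | m] =ᵐ[μ] fun ω ↦ 1 - μ[θ | m] ω := by
    have hsub := condExp_sub (integrable_const (1 : ℝ)) hθ_int m
    rwa [condExp_const hm] at hsub
  rw [hadd]
  filter_upwards [condLExp_add_right _ hmeas, hcompl,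
    condLExp_ofReal_mul_of_measurable_right hm hcompl_int
      (.of_forall fun ω ↦ sub_nonneg.2 (hθ_mem ω).2) ha ha₀,
    condLExp_ofReal_mul_of_measurable_right hm hθ_int (.of_forall fun ω ↦ (hθ_mem ω).1) hb hb₀,
    (convex_Icc (0 : ℝ) 1).condExp_mem hm hθ_int isClosed_Icc (.of_forall hθ_mem)]
    with ω hsplit hcompl hleft hright hmem
  rw [hsplit, Pi.add_apply, hleft, hright, hcompl, ENNReal.ofReal_add
    (mul_nonneg (sub_nonneg.2 hmem.2) (ha₀ ω)) (mul_nonneg hmem.1 (hb₀ ω))]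

theorem condLExp_ofReal_sum {ι : Type*} [Fintype ι] {f : ι → Ω → ℝ} (hf : ∀ i, AEMeasurable (f i) μ)
    (hf₀ : ∀ i, 0 ≤ f i) :
    μ⁻[fun ω ↦ ENNReal.ofReal (∑ i, f i ω) | m] =ᵐ[μ]
      fun ω ↦ ∑ i, μ⁻[fun ω ↦ ENNReal.ofReal (f i ω) | m] ω := by
  have hsum : (fun ω ↦ ENNReal.ofReal (∑ i, f i ω)) = ∑ i, fun ω ↦ ENNReal.ofReal (f i ω) := by
    ext ω
    rw [Finset.sum_apply, ENNReal.ofReal_sum_of_nonneg fun i _ ↦ hf₀ i ω]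
  rw [hsum]
  filter_upwards [condLExp_finsetSum m univ fun i ↦ (hf i).ennreal_ofReal] with ω hω
  rw [hω, Finset.sum_apply]

theorem condLExp_ofReal_sum_convexComb [IsFiniteMeasure μ] (hm : m ≤ m₀) {ι : Type*} [Fintype ι]
    {θ a b : ι → Ω → ℝ} (hθ : ∀ i, Measurable (θ i)) (hθ_mem : ∀ i ω, θ i ω ∈ Set.Icc (0 : ℝ) 1)
    (ha : ∀ i, Measurable[m] (a i)) (ha₀ : ∀ i, 0 ≤ a i)
    (hb : ∀ i, Measurable[m] (b i)) (hb₀ : ∀ i, 0 ≤ b i) :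
    μ⁻[fun ω ↦ ENNReal.ofReal (∑ i, ((1 - θ i ω) * a i ω + θ i ω * b i ω)) | m] =ᵐ[μ]
      fun ω ↦ ENNReal.ofReal (∑ i, ((1 - μ[θ i | m] ω) * a i ω + μ[θ i | m] ω * b i ω)) := by
  have hmeas (i : ι) : Measurable fun ω ↦ (1 - θ i ω) * a i ω + θ i ω * b i ω :=
    (((hθ i).const_sub 1).mul ((ha i).mono hm le_rfl)).add ((hθ i).mul ((hb i).mono hm le_rfl))
  have hcomb_nonneg {t : ℝ} (ht : t ∈ Set.Icc (0 : ℝ) 1) (i : ι) (ω : Ω) :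
      0 ≤ (1 - t) * a i ω + t * b i ω :=
    add_nonneg (mul_nonneg (sub_nonneg.2 ht.2) (ha₀ i ω)) (mul_nonneg ht.1 (hb₀ i ω))
  have hmem : ∀ᵐ ω ∂μ, ∀ i, μ[θ i | m] ω ∈ Set.Icc (0 : ℝ) 1 := ae_all_iff.2 fun i ↦
    (convex_Icc (0 : ℝ) 1).condExp_mem hm
      (.of_mem_Icc 0 1 (hθ i).aemeasurable (.of_forall (hθ_mem i))) isClosed_Icc
      (.of_forall (hθ_mem i))
  filter_upwards [condLExp_ofReal_sum (m := m) (fun i ↦ (hmeas i).aemeasurable)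
      fun i ω ↦ hcomb_nonneg (hθ_mem i ω) i ω,
    ae_all_iff.2 fun i ↦
      condLExp_ofReal_convexComb (μ := μ) hm (hθ i) (hθ_mem i) (ha i) (ha₀ i) (hb i) (hb₀ i),
    hmem] with ω hsum hcomb hmem
  rw [hsum, ENNReal.ofReal_sum_of_nonneg fun i _ ↦ hcomb_nonneg (hmem i) i ω]
  exact sum_congr rfl fun i _ ↦ hcomb i

theorem condExp_ae_le_of_condLExp_ofReal_ae_le {f g : Ω → ℝ} (hf : 0 ≤ᵐ[μ] f) (hg : 0 ≤ᵐ[μ] g)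
    (h : μ⁻[fun ω ↦ ENNReal.ofReal (f ω) | m] ≤ᵐ[μ] fun ω ↦ ENNReal.ofReal (g ω)) :
    μ[f | m] ≤ᵐ[μ] g := by
  by_cases hf_int : Integrable f μ
  · filter_upwards [h, condLExp_ofReal m hf_int hf, hg] with ω hle heq hgω
    rwa [heq, ENNReal.ofReal_le_ofReal_iff hgω] at hle
  · rwa [condExp_of_not_integrable hf_int]

theorem condLExp_ae_le_prod_smul {ℱ : Filtration ℕ m₀} [SigmaFiniteFiltration μ ℱ]
    {V : ℕ → Ω → ℝ≥0∞} {c : ℕ → ℝ≥0∞} (hV : Adapted ℱ V)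
    (hstep : ∀ n, μ⁻[V (n + 1) | ℱ n] ≤ᵐ[μ] c n • V n) (n : ℕ) :
    μ⁻[V n | ℱ 0] ≤ᵐ[μ] (∏ k ∈ range n, c k) • V 0 := by
  induction n with
  | zero => simp [condLExp_eq_self (ℱ.le 0) μ (hV 0), EventuallyLE.rfl]
  | succ n ih =>
    calc μ⁻[V (n + 1) | ℱ 0]
      _ =ᵐ[μ] μ⁻[μ⁻[V (n + 1) | ℱ n] | ℱ 0] :=
        (condLExp_condLExp_of_le (ℱ.mono n.zero_le) (ℱ.le n) _).symm
      _ ≤ᵐ[μ] μ⁻[c n • V n | ℱ 0] := condLExp_mono (hstep n)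
      _ =ᵐ[μ] c n • μ⁻[V n | ℱ 0] := condLExp_smul _ hV.measurable.aemeasurable _
      _ ≤ᵐ[μ] c n • (∏ k ∈ range n, c k) • V 0 := by
        filter_upwards [ih] with ω hω
        exact mul_le_mul_right hω _
      _ = (∏ k ∈ range (n + 1), c k) • V 0 := by rw [smul_smul, prod_range_succ, mul_comm]

end ConditionalExpectation

theorem condExp_apply_ae_eq_measureReal_of_indep {Ω ι : Type*} {m m₀ : MeasurableSpace Ω}
    {μ : Measure Ω} [IsProbabilityMeasure μ] (hm : m ≤ m₀) {X Y : Ω → ι → ℝ} (hX : Measurable X)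
    (hX_val : ∀ ω i, X ω i = 0 ∨ X ω i = 1) (hXY : IdentDistrib X Y μ μ)
    (hindep : Indep (MeasurableSpace.comap X inferInstance) m μ) (i : ι) :
    μ[fun ω ↦ X ω i | m] =ᵐ[μ] fun _ ↦ μ.real {ω | Y ω i = 1} := by
  have hs : MeasurableSet {y : ι → ℝ | y i = 1} := measurable_pi_apply i (measurableSet_singleton 1)
  have hX_ind : (fun ω ↦ X ω i) = {ω | X ω i = 1}.indicator 1 := by
    ext ω
    rcases hX_val ω i with h | h <;> simp [Set.indicator, h]
  have hmean : μ[fun ω ↦ X ω i] = μ.real {ω | Y ω i = 1} := by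
    have hXs : MeasurableSet {ω | X ω i = 1} := hX hs
    rw [hX_ind, integral_indicator_one hXs]
    exact congrArg ENNReal.toReal (hXY.measure_mem_eq hs)
  rw [← hmean]
  exact condExp_indep_eq hX.comap_le hm
    ((measurable_pi_apply i).comp (comap_measurable X)).stronglyMeasurable hindep

theorem norm_add_smul_sub_sub_sq_le {E : Type*} [SeminormedAddCommGroup E] [NormedSpace ℝ E]
    (x y z : E) {t : ℝ} (ht : t ∈ Set.Icc (0 : ℝ) 1) :
    ‖x + t • (y - x) - z‖ ^ 2 ≤ (1 - t) * ‖x - z‖ ^ 2 + t * ‖y - z‖ ^ 2 := by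
  have hconvex := ((convexOn_univ_dist z).pow (fun _ _ ↦ dist_nonneg) 2).2
    (Set.mem_univ x) (Set.mem_univ y) (sub_nonneg.2 ht.2) ht.1 (sub_add_cancel 1 t)
  have hcomb : (1 - t) • x + t • y = x + t • (y - x) := by module
  simpa only [hcomb, Pi.pow_apply, dist_eq_norm, smul_eq_mul] using hconvex

theorem measurable_norm_sub_sq {ι : Type*} {H : ι → Type*} [∀ i, SeminormedAddCommGroup (H i)]
    [∀ i, MeasurableSpace (H i)] [∀ i, OpensMeasurableSpace (H i)] (z : ∀ i, H i) (i : ι) :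
    Measurable fun x : ∀ i, H i ↦ ‖x i - z i‖ ^ 2 :=
  (by fun_prop : Continuous fun y : H i ↦ ‖y - z i‖ ^ 2).measurable.comp (measurable_pi_apply i)

section ContractionFactor

variable {ι : Type*} [Fintype ι] [Nonempty ι] {p τ : ι → ℝ} {lam : ℝ}

/-- The rate `χ = 1 - λ min_i p_i (1 - τ_i)` at which one step of the random block-coordinate
iteration with relaxation parameter `lam = λ`, activation probabilities `p` and block contraction
constants `τ` contracts the weighted squared distance to the fixed point. -/
noncomputable def contractionFactor (p τ : ι → ℝ) (lam : ℝ) : ℝ :=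
  1 - lam * univ.inf' univ_nonempty fun i ↦ p i * (1 - τ i)

theorem contractionFactor_nonneg (hp : ∀ i, p i ∈ Set.Icc (0 : ℝ) 1) (hτ : ∀ i, 0 ≤ τ i)
    (hlam : lam ∈ Set.Icc (0 : ℝ) 1) : 0 ≤ contractionFactor p τ lam := by
  obtain ⟨i⟩ := ‹Nonempty ι›
  have hmin : (univ.inf' ⟨i, mem_univ i⟩ fun i ↦ p i * (1 - τ i)) ≤ 1 :=
    calc _ ≤ p i * (1 - τ i) := inf'_le _ (mem_univ i)
      _ ≤ p i := mul_le_of_le_one_right (hp i).1 (sub_le_self 1 (hτ i))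
      _ ≤ 1 := (hp i).2
  exact sub_nonneg.2 ((mul_le_of_le_one_right hlam.1 hmin).trans hlam.2)

theorem contractionFactor_le {l q s : ℝ} (hl : 0 ≤ l) (hlam : l ≤ lam) (hq : 0 ≤ q)
    (hp : ∀ i, q ≤ p i) (hs : s ≤ 1) (hτ : ∀ i, τ i ≤ s) :
    contractionFactor p τ lam ≤ 1 - l * (q * (1 - s)) := by
  have hmin : q * (1 - s) ≤ univ.inf' univ_nonempty fun i ↦ p i * (1 - τ i) :=
    le_inf' _ _ fun i _ ↦ mul_le_mul (hp i) (sub_le_sub_left (hτ i) 1) (sub_nonneg.2 hs)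
      (hq.trans (hp i))
  exact sub_le_sub_left (mul_le_mul hlam hmin (mul_nonneg hq (sub_nonneg.2 hs))
    (hl.trans hlam)) 1

theorem iSup_contractionFactor_lt_one {τ : ι → ℕ → ℝ} {lam : ℕ → ℝ} (hp : ∀ i, 0 < p i)
    (hτ_bdd : ∀ i, BddAbove (Set.range (τ i)))
    (hτ : univ.sup' univ_nonempty (fun i ↦ ⨆ n, τ i n) < 1)
    (hlam_bdd : BddBelow (Set.range lam)) (hlam : 0 < ⨅ n, lam n) :
    ⨆ n, contractionFactor p (fun i ↦ τ i n) (lam n) < 1 := by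
  set s := univ.sup' univ_nonempty fun i ↦ ⨆ n, τ i n
  set q := univ.inf' univ_nonempty p
  have hq : 0 < q := (lt_inf'_iff _).2 fun i _ ↦ hp i
  have hτ_le (i : ι) (n : ℕ) : τ i n ≤ s :=
    (le_ciSup (hτ_bdd i) n).trans (le_sup' (fun i ↦ ⨆ n, τ i n) (mem_univ i))
  calc ⨆ n, contractionFactor p (fun i ↦ τ i n) (lam n)
    _ ≤ 1 - (⨅ n, lam n) * (q * (1 - s)) := ciSup_le fun n ↦
      contractionFactor_le hlam.le (ciInf_le hlam_bdd n) hq.le (fun i ↦ inf'_le p (mem_univ i))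
        hτ.le fun i ↦ hτ_le i n
    _ < 1 := sub_lt_self 1 (mul_pos hlam (mul_pos hq (sub_pos.2 hτ)))

theorem sum_convexComb_le_contractionFactor_mul {a b : ι → ℝ} (hp : ∀ i, 0 < p i)
    (hlam : 0 ≤ lam) (ha : ∀ i, 0 ≤ a i) (hab : ∑ i, b i ≤ ∑ i, τ i * a i) :
    ∑ i, ((1 - lam * p i) * ((p i)⁻¹ * a i) + lam * p i * ((p i)⁻¹ * b i)) ≤
      contractionFactor p τ lam * ∑ i, (p i)⁻¹ * a i := by
  have hcancel (i : ι) : p i * (p i)⁻¹ = 1 := mul_inv_cancel₀ (hp i).ne'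
  calc ∑ i, ((1 - lam * p i) * ((p i)⁻¹ * a i) + lam * p i * ((p i)⁻¹ * b i))
    _ = ∑ i, (1 - lam * p i) * ((p i)⁻¹ * a i) + lam * ∑ i, b i := by
      rw [sum_add_distrib, mul_sum]
      congr! 2 with i
      linear_combination lam * b i * hcancel i
    _ ≤ ∑ i, (1 - lam * p i) * ((p i)⁻¹ * a i) + lam * ∑ i, τ i * a i := by gcongr
    _ = ∑ i, (1 - lam * (p i * (1 - τ i))) * ((p i)⁻¹ * a i) := by
      rw [mul_sum, ← sum_add_distrib]
      congr! 1 with i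
      linear_combination -(lam * τ i * a i * hcancel i)
    _ ≤ ∑ i, contractionFactor p τ lam * ((p i)⁻¹ * a i) := by
      refine sum_le_sum fun i _ ↦ mul_le_mul_of_nonneg_right ?_
        (mul_nonneg (inv_nonneg.2 (hp i).le) (ha i))
      exact sub_le_sub_left (mul_le_mul_of_nonneg_left
        (inf'_le (fun i ↦ p i * (1 - τ i)) (mem_univ i)) hlam) 1
    _ = contractionFactor p τ lam * ∑ i, (p i)⁻¹ * a i := (mul_sum _ _ _).symm

end ContractionFactor

section WeightedSqDist

variable {ι : Type*} [Fintype ι] {H : ι → Type*} [∀ i, SeminormedAddCommGroup (H i)] {p : ι → ℝ}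

/-- The squared distance between two points of a product of normed spaces in which the `i`-th block
carries the weight `1 / p i`. It is the Lyapunov function of the block-coordinate iteration: a
block that is updated with probability `p i` has to be weighted by `1 / p i`. -/
noncomputable def weightedSqDist (p : ι → ℝ) (x z : ∀ i, H i) : ℝ :=
  ∑ i, (p i)⁻¹ * ‖x i - z i‖ ^ 2

theorem weightedSqDist_nonneg (hp : ∀ i, 0 ≤ p i) (x z : ∀ i, H i) : 0 ≤ weightedSqDist p x z :=
  sum_nonneg fun i _ ↦ mul_nonneg (inv_nonneg.2 (hp i)) (sq_nonneg _)

theorem sum_norm_sub_sq_le_sup'_mul_weightedSqDist [Nonempty ι] (hp : ∀ i, 0 < p i)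
    (x z : ∀ i, H i) :
    ∑ i, ‖x i - z i‖ ^ 2 ≤ univ.sup' univ_nonempty p * weightedSqDist p x z := by
  rw [weightedSqDist, mul_sum]
  refine sum_le_sum fun i _ ↦ ?_
  rw [← mul_assoc, ← div_eq_mul_inv]
  exact le_mul_of_one_le_left (sq_nonneg _) ((one_le_div (hp i)).2 (le_sup' p (mem_univ i)))

theorem weightedSqDist_le_inv_inf'_mul_sum_norm_sub_sq [Nonempty ι] (hp : ∀ i, 0 < p i)
    (x z : ∀ i, H i) :
    weightedSqDist p x z ≤ (univ.inf' univ_nonempty p)⁻¹ * ∑ i, ‖x i - z i‖ ^ 2 := by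
  rw [weightedSqDist, mul_sum]
  exact sum_le_sum fun i _ ↦ mul_le_mul_of_nonneg_right
    (inv_anti₀ ((lt_inf'_iff _).2 fun i _ ↦ hp i) (inf'_le p (mem_univ i))) (sq_nonneg _)

theorem measurable_weightedSqDist [∀ i, MeasurableSpace (H i)] [∀ i, OpensMeasurableSpace (H i)]
    (z : ∀ i, H i) : Measurable fun x ↦ weightedSqDist p x z :=
  Finset.measurable_fun_sum _ fun i _ ↦ (measurable_norm_sub_sq z i).const_mul _

theorem condExp_sum_norm_sub_sq_ae_le_of_condLExp_weightedSqDist_ae_le [Nonempty ι]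
    {Ω : Type*} {m F : MeasurableSpace Ω} {μ : Measure Ω} {z : ∀ i, H i} (hp : ∀ i, 0 < p i)
    {X Y : Ω → ∀ i, H i} {c : ℝ} (hc : 0 ≤ c)
    (h : μ⁻[fun ω ↦ ENNReal.ofReal (weightedSqDist p (X ω) z) | m] ≤ᵐ[μ]
      ENNReal.ofReal c • fun ω ↦ ENNReal.ofReal (weightedSqDist p (Y ω) z)) :
    μ[fun ω ↦ ∑ i, ‖X ω i - z i‖ ^ 2 | m] ≤ᵐ[μ] fun ω ↦
      univ.sup' univ_nonempty p / univ.inf' univ_nonempty p *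
        (c * ∑ i, ‖Y ω i - z i‖ ^ 2) := by
  set pmax := univ.sup' univ_nonempty p
  set pmin := univ.inf' univ_nonempty p
  have hpmin : 0 < pmin := (lt_inf'_iff _).2 fun i _ ↦ hp i
  have hpmax : 0 ≤ pmax := hpmin.le.trans
    ((inf'_le p (mem_univ (Classical.arbitrary ι))).trans (le_sup' p (mem_univ _)))
  have hsum_nonneg (x : ∀ i, H i) : 0 ≤ ∑ i, ‖x i - z i‖ ^ 2 :=
    sum_nonneg fun i _ ↦ sq_nonneg _
  refine condExp_ae_le_of_condLExp_ofReal_ae_le (.of_forall fun ω ↦ hsum_nonneg _)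
    (.of_forall fun ω ↦ mul_nonneg (div_nonneg hpmax hpmin.le) (mul_nonneg hc (hsum_nonneg _))) ?_
  calc μ⁻[fun ω ↦ ENNReal.ofReal (∑ i, ‖X ω i - z i‖ ^ 2) | m]
    _ ≤ᵐ[μ] μ⁻[ENNReal.ofReal pmax • fun ω ↦ ENNReal.ofReal (weightedSqDist p (X ω) z) | m] :=
      condLExp_mono <| .of_forall fun ω ↦ by
        rw [Pi.smul_apply, smul_eq_mul, ← ENNReal.ofReal_mul hpmax]
        exact ENNReal.ofReal_le_ofReal (sum_norm_sub_sq_le_sup'_mul_weightedSqDist hp _ _)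
    _ =ᵐ[μ] ENNReal.ofReal pmax • μ⁻[fun ω ↦ ENNReal.ofReal (weightedSqDist p (X ω) z) | m] :=
      condLExp_smul' _ ENNReal.ofReal_ne_top
    _ ≤ᵐ[μ] fun ω ↦ ENNReal.ofReal (pmax / pmin * (c * ∑ i, ‖Y ω i - z i‖ ^ 2)) := by
      filter_upwards [h] with ω hω
      calc ENNReal.ofReal pmax * _
        _ ≤ ENNReal.ofReal pmax *
            (ENNReal.ofReal c * ENNReal.ofReal (weightedSqDist p (Y ω) z)) :=
          mul_le_mul_right hω _
        _ = ENNReal.ofReal (pmax * (c * weightedSqDist p (Y ω) z)) := by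
          rw [ENNReal.ofReal_mul hpmax, ENNReal.ofReal_mul hc]
        _ ≤ ENNReal.ofReal (pmax * (c * (pmin⁻¹ * ∑ i, ‖Y ω i - z i‖ ^ 2))) := by
          gcongr
          exact weightedSqDist_le_inv_inf'_mul_sum_norm_sub_sq hp _ _
        _ = _ := by congr 1; ring

variable [∀ i, NormedSpace ℝ (H i)]

theorem weightedSqDist_relaxation_le (hp : ∀ i, 0 ≤ p i) (x y z : ∀ i, H i) {θ : ι → ℝ}
    (hθ : ∀ i, θ i ∈ Set.Icc (0 : ℝ) 1) :
    weightedSqDist p (fun i ↦ x i + θ i • (y i - x i)) z ≤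
      ∑ i, ((1 - θ i) * ((p i)⁻¹ * ‖x i - z i‖ ^ 2) + θ i * ((p i)⁻¹ * ‖y i - z i‖ ^ 2)) := by
  refine sum_le_sum fun i _ ↦ ?_
  calc (p i)⁻¹ * ‖x i + θ i • (y i - x i) - z i‖ ^ 2
    _ ≤ (p i)⁻¹ * ((1 - θ i) * ‖x i - z i‖ ^ 2 + θ i * ‖y i - z i‖ ^ 2) :=
      mul_le_mul_of_nonneg_left (norm_add_smul_sub_sub_sq_le _ _ _ (hθ i)) (inv_nonneg.2 (hp i))
    _ = _ := by ring

end WeightedSqDist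

section Iteration

variable {Ω : Type*} {m F : MeasurableSpace Ω} {μ : Measure Ω}
  {ι : Type*} [Fintype ι] [Nonempty ι] {H : ι → Type*} [∀ i, SeminormedAddCommGroup (H i)]
  [∀ i, NormedSpace ℝ (H i)] [∀ i, MeasurableSpace (H i)] [∀ i, OpensMeasurableSpace (H i)]
  {p : ι → ℝ} {z : ∀ i, H i}

theorem condLExp_weightedSqDist_relaxation_le [IsFiniteMeasure μ] (hm : m ≤ F)
    {S : (∀ i, H i) → ∀ i, H i} (hS : Measurable S) {τ : ι → ℝ}
    (hS_contr : ∀ x, ∑ i, ‖S x i - z i‖ ^ 2 ≤ ∑ i, τ i * ‖x i - z i‖ ^ 2)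
    {X : Ω → ∀ i, H i} (hX : Measurable[m] X) {θ : ι → Ω → ℝ} (hθ : ∀ i, Measurable (θ i))
    (hθ_mem : ∀ i ω, θ i ω ∈ Set.Icc (0 : ℝ) 1) (hp : ∀ i, 0 < p i) {lam : ℝ} (hlam : 0 ≤ lam)
    (hθ_mean : ∀ i, μ[θ i | m] =ᵐ[μ] fun _ ↦ lam * p i) :
    μ⁻[fun ω ↦ ENNReal.ofReal
        (weightedSqDist p (fun i ↦ X ω i + θ i ω • (S (X ω) i - X ω i)) z) | m] ≤ᵐ[μ]
      ENNReal.ofReal (contractionFactor p τ lam) •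
        fun ω ↦ ENNReal.ofReal (weightedSqDist p (X ω) z) := by
  have hinv (i : ι) : 0 ≤ (p i)⁻¹ := inv_nonneg.2 (hp i).le
  have hdist (i : ι) := (measurable_norm_sub_sq z i).const_mul (p i)⁻¹
  have hle := condLExp_mono (mΩ := m) (P := μ) <| .of_forall fun ω ↦ ENNReal.ofReal_le_ofReal <|
    weightedSqDist_relaxation_le (fun i ↦ (hp i).le) (X ω) (S (X ω)) z fun i ↦ hθ_mem i ω
  have heq := condLExp_ofReal_sum_convexComb (μ := μ) hm hθ hθ_mem
    (fun i ↦ (hdist i).comp hX) (fun i ω ↦ mul_nonneg (hinv i) (sq_nonneg _))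
    (fun i ↦ (hdist i).comp (hS.comp hX)) (fun i ω ↦ mul_nonneg (hinv i) (sq_nonneg _))
  filter_upwards [hle, heq, ae_all_iff.2 hθ_mean] with ω hle heq hmean
  refine (hle.trans_eq heq).trans ?_
  simp only [hmean, Pi.smul_apply, smul_eq_mul, Function.comp_apply]
  rw [← ENNReal.ofReal_mul' (weightedSqDist_nonneg (fun i ↦ (hp i).le) _ _)]
  exact ENNReal.ofReal_le_ofReal (sum_convexComb_le_contractionFactor_mul hp hlam
    (fun i ↦ sq_nonneg _) (hS_contr (X ω)))

theorem condLExp_weightedSqDist_ae_le_prod_smul [IsFiniteMeasure μ] {ℱ : Filtration ℕ F}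
    {T : ℕ → (∀ i, H i) → ∀ i, H i} (hT : ∀ n, Measurable (T n)) {τ : ι → ℕ → ℝ}
    (hT_contr : ∀ n x, ∑ i, ‖T n x i - z i‖ ^ 2 ≤ ∑ i, τ i n * ‖x i - z i‖ ^ 2)
    {lam : ℕ → ℝ} (hlam : ∀ n, lam n ∈ Set.Icc (0 : ℝ) 1)
    {x : ℕ → Ω → ∀ i, H i} (hx : Adapted ℱ x) {ε : ℕ → Ω → ι → ℝ}
    (hε : ∀ n i, Measurable fun ω ↦ ε n ω i) (hε_mem : ∀ n ω i, ε n ω i ∈ Set.Icc (0 : ℝ) 1)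
    (hε_mean : ∀ n i, μ[fun ω ↦ ε n ω i | ℱ n] =ᵐ[μ] fun _ ↦ p i) (hp : ∀ i, 0 < p i)
    (hx_succ : ∀ n ω i,
      x (n + 1) ω i = x n ω i + (ε n ω i * lam n) • (T n (x n ω) i - x n ω i)) (n : ℕ) :
    μ⁻[fun ω ↦ ENNReal.ofReal (weightedSqDist p (x n ω) z) | ℱ 0] ≤ᵐ[μ]
      (∏ k ∈ range n, ENNReal.ofReal (contractionFactor p (fun i ↦ τ i k) (lam k))) •
        fun ω ↦ ENNReal.ofReal (weightedSqDist p (x 0 ω) z) := by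
  have hV : Adapted ℱ fun n ω ↦ ENNReal.ofReal (weightedSqDist p (x n ω) z) :=
    fun n ↦ ((measurable_weightedSqDist z).comp (hx n)).ennreal_ofReal
  refine condLExp_ae_le_prod_smul hV (fun n ↦ ?_) n
  have hmean (i : ι) : μ[fun ω ↦ ε n ω i * lam n | ℱ n] =ᵐ[μ] fun _ ↦ lam n * p i := by
    simp only [mul_comm _ (lam n)]
    filter_upwards [condExp_smul (lam n) (fun ω ↦ ε n ω i) (ℱ n) (μ := μ), hε_mean n i]
      with ω hsmul hmean
    rw [← hmean]
    exact hsmul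
  have hstep := condLExp_weightedSqDist_relaxation_le (ℱ.le n) (hT n) (hT_contr n) (hx n)
    (fun i ↦ (hε n i).mul_const (lam n))
    (fun i ω ↦ unitInterval.mul_mem (hε_mem n ω i) (hlam n)) hp (hlam n).1 hmean
  simpa only [← hx_succ] using hstep

end Iteration

theorem block_coordinate_error_free_linear_convergence_general
    {Ω : Type*} {F : MeasurableSpace Ω} (μ : Measure Ω) [IsProbabilityMeasure μ]
    {ι : Type*} [Fintype ι] [Nonempty ι] {H : ι → Type*}
    [∀ i, SeminormedAddCommGroup (H i)] [∀ i, NormedSpace ℝ (H i)]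
    [∀ i, MeasurableSpace (H i)] [∀ i, OpensMeasurableSpace (H i)]
    (T : ℕ → (∀ i, H i) → ∀ i, H i) (hT_meas : ∀ n, Measurable (T n))
    (τ : ι → ℕ → ℝ) (hτ : ∀ i n, τ i n ∈ Set.Icc (0 : ℝ) 1) (xbar : ∀ i, H i)
    (hT_contr : ∀ n x, ∑ i, ‖T n x i - xbar i‖ ^ 2 ≤ ∑ i, τ i n * ‖x i - xbar i‖ ^ 2)
    (lam : ℕ → ℝ) (hlam : ∀ n, lam n ∈ Set.Icc (0 : ℝ) 1) (hlam_inf : 0 < ⨅ n, lam n)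
    (ℱ : Filtration ℕ F) (x : ℕ → Ω → ∀ i, H i) (hx : Adapted ℱ x) (ε : ℕ → Ω → ι → ℝ)
    (hε_meas : ∀ n i, Measurable fun ω ↦ ε n ω i)
    (hε_mem : ∀ n ω i, ε n ω i ∈ Set.Icc (0 : ℝ) 1)
    (hx_succ : ∀ n ω i,
      x (n + 1) ω i = x n ω i + (ε n ω i * lam n) • (T n (x n ω) i - x n ω i))
    (p : ι → ℝ) (hp_pos : ∀ i, 0 < p i)
    (hε_mean : ∀ n i, μ[fun ω ↦ ε n ω i | ℱ n] =ᵐ[μ] fun _ ↦ p i) :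
    (∀ n, ∀ᵐ ω ∂μ, μ[fun ω' ↦ ∑ i, ‖x (n + 1) ω' i - xbar i‖ ^ 2 | ℱ 0] ω ≤
      univ.sup' univ_nonempty p / univ.inf' univ_nonempty p *
        ((∏ k ∈ range (n + 1), contractionFactor p (fun i ↦ τ i k) (lam k)) *
          ∑ i, ‖x 0 ω i - xbar i‖ ^ 2)) ∧
      (univ.sup' univ_nonempty (fun i ↦ ⨆ n, τ i n) < 1 →
        ⨆ n, contractionFactor p (fun i ↦ τ i n) (lam n) < 1) := by
  have hp_mem (i : ι) : p i ∈ Set.Icc (0 : ℝ) 1 := by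
    have hε_int : Integrable (fun ω ↦ ε 0 ω i) μ :=
      .of_mem_Icc 0 1 (hε_meas 0 i).aemeasurable (.of_forall fun ω ↦ hε_mem 0 ω i)
    obtain ⟨ω, hmem, hmean⟩ := (((convex_Icc (0 : ℝ) 1).condExp_mem (ℱ.le 0) hε_int isClosed_Icc
      (.of_forall fun ω ↦ hε_mem 0 ω i)).and (hε_mean 0 i)).exists
    rwa [hmean] at hmem
  have hχ (k : ℕ) : 0 ≤ contractionFactor p (fun i ↦ τ i k) (lam k) :=
    contractionFactor_nonneg hp_mem (fun i ↦ (hτ i k).1) (hlam k)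
  refine ⟨fun n ↦ ?_, fun hτ_lt ↦ iSup_contractionFactor_lt_one hp_pos
    (fun i ↦ ⟨1, Set.forall_mem_range.2 fun n ↦ (hτ i n).2⟩) hτ_lt
    ⟨0, Set.forall_mem_range.2 fun n ↦ (hlam n).1⟩ hlam_inf⟩
  refine condExp_sum_norm_sub_sq_ae_le_of_condLExp_weightedSqDist_ae_le hp_pos
    (prod_nonneg fun k _ ↦ hχ k) ?_
  rw [ENNReal.ofReal_prod_of_nonneg fun k _ ↦ hχ k]
  exact condLExp_weightedSqDist_ae_le_prod_smul hT_meas hT_contr hlam hx hε_meas hε_mem hε_mean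
    hp_pos hx_succ (n + 1)

/-- Error-free case: linear convergence of the conditional mean-square error of the
block-coordinate fixed point algorithm with random sweeping. -/
theorem block_coordinate_error_free_linear_convergence
    {Ω : Type*} {F : MeasurableSpace Ω} (μ : Measure Ω) [IsProbabilityMeasure μ]
    {m : ℕ} [NeZero m] {H : Fin m → Type*}
    [∀ i, NormedAddCommGroup (H i)] [∀ i, InnerProductSpace ℝ (H i)]
    [∀ i, CompleteSpace (H i)] [∀ i, SecondCountableTopology (H i)]
    [∀ i, MeasurableSpace (H i)] [∀ i, BorelSpace (H i)]
    (T : ℕ → (∀ i, H i) → ∀ i, H i) (hT_meas : ∀ n, Measurable (T n))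
    (τ : Fin m → ℕ → ℝ) (hτ : ∀ i n, τ i n ∈ Set.Ico (0 : ℝ) 1)
    (xbar : ∀ i, H i)
    (hT_qne : ∀ n (z : ∀ i, H i), T n z = z → ∀ x : ∀ i, H i,
      ∑ i, ‖T n x i - z i‖ ^ 2 ≤ ∑ i, ‖x i - z i‖ ^ 2)
    (hT_fix : ∀ n, T n xbar = xbar)
    (hT_contr : ∀ n (x : ∀ i, H i),
      ∑ i, ‖T n x i - xbar i‖ ^ 2 ≤ ∑ i, τ i n * ‖x i - xbar i‖ ^ 2)
    (lam : ℕ → ℝ) (hlam : ∀ n, lam n ∈ Set.Ioc (0 : ℝ) 1) (hlam_inf : 0 < ⨅ n, lam n)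
    (x : ℕ → Ω → ∀ i, H i) (ε : ℕ → Ω → Fin m → ℝ)
    (hx_meas : ∀ n, Measurable (x n))
    (hε_meas : ∀ n, Measurable (ε n))
    (hε_val : ∀ n ω i, ε n ω i = 0 ∨ ε n ω i = 1)
    (hε_D : ∀ n ω, ∃ i, ε n ω i = 1)
    (hε_ident : ∀ n, Measure.map (ε n) μ = Measure.map (ε 0) μ)
    (hAlgo : ∀ n ω i,
      x (n + 1) ω i = x n ω i + (ε n ω i * lam n) • (T n (x n ω) i - x n ω i))
    (ℱ : ℕ → MeasurableSpace Ω)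
    (hℱ_mono : ∀ n, ℱ n ≤ ℱ (n + 1)) (hℱ_le : ∀ n, ℱ n ≤ F)
    (hx_adapted : ∀ n k, k ≤ n → Measurable[ℱ n] (x k))
    (hindep : ∀ n, Indep (MeasurableSpace.comap (ε n) inferInstance) (ℱ n) μ)
    (p : Fin m → ℝ) (hp_def : ∀ i, p i = (μ {ω | ε 0 ω i = 1}).toReal)
    (hp_pos : ∀ i, 0 < p i)
    :
    (∀ n, ∀ᵐ ω ∂μ,
      (μ[fun ω' => ∑ i, ‖x (n + 1) ω' i - xbar i‖ ^ 2|ℱ 0]) ω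
        ≤ (Finset.univ.sup' Finset.univ_nonempty p
              / Finset.univ.inf' Finset.univ_nonempty p)
            * ((∏ k ∈ Finset.range (n + 1),
                  (1 - lam k * Finset.univ.inf' Finset.univ_nonempty
                      (fun i => p i * (1 - τ i k))))
                * ∑ i, ‖x 0 ω i - xbar i‖ ^ 2)) ∧
      (Finset.univ.sup' Finset.univ_nonempty (fun i => ⨆ n, τ i n) < 1 →
        (⨆ n, (1 - lam n * Finset.univ.inf' Finset.univ_nonempty
            (fun i => p i * (1 - τ i n)))) < 1) := by
  have hp (n : ℕ) (i : Fin m) : μ[fun ω ↦ ε n ω i | ℱ n] =ᵐ[μ] fun _ ↦ p i := by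
    rw [hp_def i]
    exact condExp_apply_ae_eq_measureReal_of_indep (hℱ_le n) (hε_meas n) (hε_val n)
      ⟨(hε_meas n).aemeasurable, (hε_meas 0).aemeasurable, hε_ident n⟩ (hindep n) i
  have hε_mem (n : ℕ) (ω : Ω) (i : Fin m) : ε n ω i ∈ Set.Icc (0 : ℝ) 1 := by
    rcases hε_val n ω i with h | h <;> simp [h]
  exact block_coordinate_error_free_linear_convergence_general μ T hT_meas τ
    (fun i n ↦ Set.Ico_subset_Icc_self (hτ i n)) xbar hT_contr lam
    (fun n ↦ Set.Ioc_subset_Icc_self (hlam n)) hlam_inf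
    ⟨ℱ, monotone_nat_of_le_succ hℱ_mono, hℱ_le⟩ x (fun n ↦ hx_adapted n n le_rfl) ε
    (fun n i ↦ (measurable_pi_apply i).comp (hε_meas n)) hε_mem hAlgo p hp_pos hp
end

section
/- Let H be a real Hilbert space, let β ∈ (0,∞), let B: H → H be β-cocoercive, let θ ∈ [0,∞), and let γ ∈ (0,∞). Then the operator Id − γ(B + θ·Id): H → H is Lipschitz continuous with constant |1 − γ(θ + 1/(2β))| + γ/(2β). -/
open scoped RealInnerProductSpace

/-!
Completing the square shows that `B` is `β`-cocoercive exactly when `B - (2β)⁻¹ Id` is Lipschitz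
continuous with constant `(2β)⁻¹`. Centering `B` in this way,
`Id - γ(B + θ Id) = (1 - γ(θ + (2β)⁻¹)) Id - γ(B - (2β)⁻¹ Id)`, and the triangle inequality
gives the constant.
-/

section

variable {𝕜 E : Type*} [RCLike 𝕜] [SeminormedAddCommGroup E] [InnerProductSpace 𝕜 E]

variable (𝕜) in
/-- `β`-cocoercivity of an operator `B`, the hypothesis on the forward part of a splitting method.
Over `ℂ` the inner product is replaced by its real part. -/
def IsCocoercive (β : ℝ) (B : E → E) : Prop :=
  ∀ x y : E, β * ‖B x - B y‖ ^ 2 ≤ RCLike.re (inner 𝕜 (x - y) (B x - B y))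

theorem norm_sub_real_smul_sq (c : ℝ) (u v : E) :
    ‖v - (c : 𝕜) • u‖ ^ 2 =
      ‖v‖ ^ 2 - 2 * c * RCLike.re (inner 𝕜 u v) + (c * ‖u‖) ^ 2 := by
  rw [norm_sub_sq (𝕜 := 𝕜), inner_smul_right, RCLike.re_ofReal_mul, inner_re_symm, norm_smul,
    RCLike.norm_ofReal, mul_pow, sq_abs, mul_pow, mul_assoc]

theorem mul_norm_sq_le_re_inner_iff_norm_sub_le {β : ℝ} (hβ : 0 < β) (u v : E) :
    β * ‖v‖ ^ 2 ≤ RCLike.re (inner 𝕜 u v) ↔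
      ‖v - ((1 / (2 * β) : ℝ) : 𝕜) • u‖ ≤ 1 / (2 * β) * ‖u‖ := by
  have two_mul_radius : 2 * (1 / (2 * β)) = β⁻¹ := by field_simp
  rw [← sq_le_sq₀ (norm_nonneg _) (by positivity), norm_sub_real_smul_sq, two_mul_radius,
    add_le_iff_nonpos_left, sub_nonpos, le_inv_mul_iff₀ hβ]

theorem isCocoercive_iff_norm_sub_le {β : ℝ} (hβ : 0 < β) {B : E → E} :
    IsCocoercive 𝕜 β B ↔ ∀ x y : E,
      ‖(B x - B y) - ((1 / (2 * β) : ℝ) : 𝕜) • (x - y)‖ ≤ 1 / (2 * β) * ‖x - y‖ :=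
  forall₂_congr fun _ _ ↦ mul_norm_sq_le_re_inner_iff_norm_sub_le hβ _ _

theorem forward_step_lipschitz_general {β : ℝ} (hβ : 0 < β) {B : E → E}
    (hB : IsCocoercive 𝕜 β B) (θ γ : 𝕜) (x y : E) :
    ‖(x - γ • (B x + θ • x)) - (y - γ • (B y + θ • y))‖ ≤
      (‖1 - γ * (θ + ((1 / (2 * β) : ℝ) : 𝕜))‖ + ‖γ‖ / (2 * β)) * ‖x - y‖ := by
  set c : 𝕜 := ((1 / (2 * β) : ℝ) : 𝕜)
  have centered : (x - γ • (B x + θ • x)) - (y - γ • (B y + θ • y)) =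
      (1 - γ * (θ + c)) • (x - y) - γ • ((B x - B y) - c • (x - y)) := by
    module
  calc ‖(x - γ • (B x + θ • x)) - (y - γ • (B y + θ • y))‖
      ≤ ‖1 - γ * (θ + c)‖ * ‖x - y‖ + ‖γ‖ * ‖(B x - B y) - c • (x - y)‖ := by
        rw [centered, ← norm_smul, ← norm_smul]
        exact norm_sub_le _ _
    _ ≤ ‖1 - γ * (θ + c)‖ * ‖x - y‖ + ‖γ‖ * (1 / (2 * β) * ‖x - y‖) := by
        gcongr
        exact (isCocoercive_iff_norm_sub_le hβ).mp hB x y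
    _ = (‖1 - γ * (θ + c)‖ + ‖γ‖ / (2 * β)) * ‖x - y‖ := by ring

end

/-- Example 4.2: if `B` is `β`-cocoercive, then `Id − γ(B + θ Id)` is Lipschitz
continuous with constant `|1 − γ(θ + 1/(2β))| + γ/(2β)`. -/
theorem forward_step_lipschitz
    {H : Type*} [NormedAddCommGroup H] [InnerProductSpace ℝ H]
    (β : ℝ) (hβ : 0 < β) (B : H → H)
    (hB : ∀ x y : H, β * ‖B x - B y‖ ^ 2 ≤ ⟪x - y, B x - B y⟫)
    (θ : ℝ) (hθ : 0 ≤ θ) (γ : ℝ) (hγ : 0 < γ) :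
    ∀ x y : H,
      ‖(x - γ • (B x + θ • x)) - (y - γ • (B y + θ • y))‖
        ≤ (|1 - γ * (θ + 1 / (2 * β))| + γ / (2 * β)) * ‖x - y‖ := by
  have cocoercive : IsCocoercive ℝ β B := hB
  simpa only [Real.norm_eq_abs, abs_of_pos hγ, RCLike.ofReal_real_eq_id, id_eq] using
    forward_step_lipschitz_general hβ cocoercive θ γ
end
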